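/- arXiv:2011.10703 — 4 statements merged into one kernel-verified Lean document; each statement's English description precedes it below -/
import Mathlib

section
/- Let n be a natural number and let v : Fin n → ℂ be a point of affine n-space all of whose coordinates are algebraic over ℚ. Suppose that for every prime number p there exists a ring isomorphism σ : ℂ ≃+* AlgebraicClosure(ℚ_p) such that for every i, σ(v i) lies in the image of the canonical map ℚ_p → AlgebraicClosure(ℚ_p). Then every coordinate v i lies in the image of ℚ in ℂ, i.e. v is defined over ℚ. -/
open NumberField nonZeroDivisors Filter Topology UniqueFactorizationMonoid

lemma norm_ker {K : Type*} [Field K] [NumberField K] {p : ℕ} (_hp : p.Prime)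
    (φ : 𝓞 K →+* ZMod p) : Ideal.absNorm (RingHom.ker φ) = p := by
  have hs : Function.Surjective φ := ZMod.ringHom_surjective φ
  rw [Ideal.absNorm_apply, Submodule.cardQuot_apply]
  rw [Nat.card_congr (RingHom.quotientKerEquivOfSurjective hs).toEquiv, Nat.card_zmod]

lemma hom_of_norm {K : Type*} [Field K] [NumberField K] {p : ℕ} (hp : p.Prime)
    (Q : Ideal (𝓞 K)) (hQ : Ideal.absNorm Q = p) :
    ∃ φ : 𝓞 K →+* ZMod p, RingHom.ker φ = Q := by
  rw [Ideal.absNorm_apply, Submodule.cardQuot_apply] at hQ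
  have : Finite (𝓞 K ⧸ Q) := Nat.finite_of_card_ne_zero (hQ ▸ hp.ne_zero)
  let _ : Fintype (𝓞 K ⧸ Q) := Fintype.ofFinite _
  let e := ZMod.ringEquivOfPrime (𝓞 K ⧸ Q) hp (by rw [← Nat.card_eq_fintype_card, hQ])
  refine ⟨(e.symm : (𝓞 K ⧸ Q) →+* ZMod p).comp (Ideal.Quotient.mk Q), ?_⟩
  ext x
  simp [RingHom.mem_ker, Ideal.Quotient.eq_zero_iff_mem]

lemma hom_ext_of_ker {R : Type*} [CommRing R] {p : ℕ} (hp : p.Prime)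
    (φ ψ : R →+* ZMod p) (h : RingHom.ker φ = RingHom.ker ψ) : φ = ψ := by
  have : NeZero p := ⟨hp.ne_zero⟩
  ext x
  have h1 : x - ((φ x).val : R) ∈ RingHom.ker φ := by simp [RingHom.mem_ker]
  rw [h, RingHom.mem_ker] at h1
  simp [sub_eq_zero] at h1
  exact h1.symm

lemma eq_of_dvd {K : Type*} [Field K] [NumberField K] {P Q : Ideal (𝓞 K)}
    (hP : (Ideal.absNorm P).Prime) (hQ : (Ideal.absNorm Q).Prime) (h : P ∣ Q) : P = Q := by
  have h1 : Ideal.absNorm P = Ideal.absNorm Q :=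
    (Nat.prime_dvd_prime_iff_eq hP hQ).1 (map_dvd _ h)
  obtain ⟨J, rfl⟩ := h
  rw [map_mul] at h1
  have h2 : Ideal.absNorm J = 1 := by
    have := hP.pos
    nlinarith [Nat.eq_of_mul_eq_mul_left this (h1.symm.trans (mul_one _).symm)]
  rw [Ideal.absNorm_eq_one_iff] at h2
  simp [h2]

lemma prime_of_norm {K : Type*} [Field K] [NumberField K] {P : Ideal (𝓞 K)}
    (hP : (Ideal.absNorm P).Prime) : Prime P :=
  (Ideal.irreducible_of_irreducible_absNorm hP).prime

/-- key inequality -/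
lemma count_ge {K : Type*} [Field K] [NumberField K] (P : ℕ → Ideal (𝓞 K))
    (hP : ∀ p, p.Prime → Ideal.absNorm (P p) = p) (P' : ℕ → Ideal (𝓞 K)) (T : Finset ℕ)
    (hT : ∀ p ∈ T, p.Prime ∧ Ideal.absNorm (P' p) = p ∧ P' p ≠ P p) (n : ℕ) :
    ∑ p ∈ T, n / p ≤ Nat.card {I : (Ideal (𝓞 K))⁰ // Ideal.absNorm (I : Ideal (𝓞 K)) ≤ (n:ℝ)} := by
  classical
  let I : ℕ → Ideal (𝓞 K) := fun m => (m.primeFactorsList.map P).prod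
  have hI : ∀ m, m ≠ 0 → Ideal.absNorm (I m) = m := by
    intro m hm
    have : (m.primeFactorsList.map P).map Ideal.absNorm = m.primeFactorsList := by
      rw [List.map_map]
      conv_rhs => rw [← List.map_id m.primeFactorsList]
      apply List.map_congr_left
      intro q hq
      exact hP q (Nat.prime_of_mem_primeFactorsList hq)
    simp only [I]
    rw [map_list_prod, this, Nat.prod_primeFactorsList hm]
  have hfin : Finite {I : (Ideal (𝓞 K))⁰ // Ideal.absNorm (I : Ideal (𝓞 K)) ≤ (n:ℝ)} := by
    simp only [Nat.cast_le]
    exact (Ideal.finite_setOfPred_absNorm_le₀ (S := 𝓞 K) n).to_subtype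
  have hmem : ∀ x : (Σ p : T, Fin (n / p)),
      Ideal.absNorm (I (x.2 + 1) * P' x.1) = (x.2 + 1) * x.1 := by
    intro x
    rw [map_mul, hI _ (by omega), (hT x.1 x.1.2).2.1]
  let F : (Σ p : T, Fin (n / p)) →
      {I : (Ideal (𝓞 K))⁰ // Ideal.absNorm (I : Ideal (𝓞 K)) ≤ (n:ℝ)} := fun x =>
    ⟨⟨I (x.2 + 1) * P' x.1, by
      rw [← Ideal.absNorm_ne_zero_iff_mem_nonZeroDivisors, hmem]
      have := (hT x.1 x.1.2).1.pos
      positivity⟩, by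
      simp only [hmem]
      have h1 := x.2.2
      have : ((x.2:ℕ) + 1) * x.1 ≤ n := (Nat.mul_le_mul_right _ h1).trans (Nat.div_mul_le_self _ _)
      exact_mod_cast this⟩
  have hF : Function.Injective F := by
    rintro ⟨⟨p, hp⟩, a⟩ ⟨⟨q, hq⟩, b⟩ hab
    have h1 : I (a + 1) * P' p = I (b + 1) * P' q := by
      simpa [F] using congrArg (fun z => (z.1.1 : Ideal (𝓞 K))) hab
    obtain ⟨hp1, hp2, hp3⟩ := hT p hp
    obtain ⟨hq1, hq2, hq3⟩ := hT q hq
    have hpr : Prime (P' p) := prime_of_norm (by rwa [hp2])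
    have hpq : p = q := by
      have hd : P' p ∣ I (b + 1) * P' q := h1 ▸ dvd_mul_left _ _
      rcases hpr.dvd_or_dvd hd with hd | hd
      · exfalso
        obtain ⟨J, hJ, hJd⟩ := (hpr.dvd_prod_iff).1 hd
        obtain ⟨r, hr, rfl⟩ := List.mem_map.1 hJ
        have hr1 := Nat.prime_of_mem_primeFactorsList hr
        have h2 := eq_of_dvd (by rwa [hp2]) (by rwa [hP r hr1]) hJd
        have h3 : p = r := by rw [← hp2, h2, hP r hr1]
        subst h3
        exact hp3 h2
      · have h2 := eq_of_dvd (by rwa [hp2]) (by rwa [hq2]) hd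
        rw [← hp2, h2, hq2]
    subst hpq
    have h4 := congrArg Ideal.absNorm h1
    rw [map_mul, map_mul, hI _ (by omega), hI _ (by omega), hp2] at h4
    have h5 := Nat.eq_of_mul_eq_mul_right hp1.pos h4
    have : a = b := Fin.ext (by omega)
    rw [this]
  have := Nat.card_le_card_of_injective F hF
  rw [Nat.card_sigma] at this
  simp only [Nat.card_eq_fintype_card, Fintype.card_fin] at this
  rwa [Finset.sum_coe_sort T (fun p => n / p)] at this

lemma summable_two {K : Type*} [Field K] [NumberField K]
    (h1 : ∀ p : ℕ, p.Prime → Nonempty (𝓞 K →+* ZMod p)) :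
    Summable (Set.indicator {p : ℕ | p.Prime ∧ ∃ φ ψ : 𝓞 K →+* ZMod p, φ ≠ ψ}
      (fun p => (1 / p : ℝ))) := by
  classical
  set T := {p : ℕ | p.Prime ∧ ∃ φ ψ : 𝓞 K →+* ZMod p, φ ≠ ψ}
  have hP : ∀ p : ℕ, ∃ P : Ideal (𝓞 K), p.Prime → Ideal.absNorm P = p := by
    intro p
    by_cases hp : p.Prime
    · exact ⟨RingHom.ker (h1 p hp).some, fun _ => norm_ker hp _⟩
    · exact ⟨⊤, fun h => absurd h hp⟩
  choose P hP using hP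
  have hP' : ∀ p : ℕ, ∃ P' : Ideal (𝓞 K), p ∈ T → p.Prime ∧ Ideal.absNorm P' = p ∧ P' ≠ P p := by
    intro p
    by_cases hp : p ∈ T
    · obtain ⟨hp, φ, ψ, hne⟩ := hp
      by_cases h : RingHom.ker φ = P p
      · refine ⟨RingHom.ker ψ, fun _ => ⟨hp, norm_ker hp _, fun h' => hne ?_⟩⟩
        exact hom_ext_of_ker hp _ _ (h.trans h'.symm)
      · exact ⟨RingHom.ker φ, fun _ => ⟨hp, norm_ker hp _, h⟩⟩
    · exact ⟨⊤, fun h => absurd h hp⟩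
  choose P' hP' using hP'
  have hlim := (Ideal.tendsto_norm_le_div_atTop₀ K).comp (tendsto_natCast_atTop_atTop (R := ℝ))
  set ρ := ((2 ^ InfinitePlace.nrRealPlaces K * (2 * Real.pi) ^ InfinitePlace.nrComplexPlaces K * Units.regulator K * classNumber K) /
            (Units.torsionOrder K * Real.sqrt |discr K|))
  refine summable_of_sum_le (c := ρ) (fun p => Set.indicator_nonneg (fun _ _ => by positivity) _) ?_
  intro u
  have hsum : ∑ x ∈ u, T.indicator (fun p => (1 / p : ℝ)) x = ∑ p ∈ u with p ∈ T, (1 / p : ℝ) := by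
    rw [Finset.sum_filter]; exact Finset.sum_congr rfl fun x _ => Set.indicator_apply _ _ _
  rw [hsum]
  set U := u.filter (· ∈ T)
  have key := count_ge P hP P' U (fun p hp => hP' p (Finset.mem_filter.1 hp).2)
  have hl : Tendsto (fun n : ℕ => ∑ p ∈ U, (1 / p : ℝ) - (U.card : ℝ) / n) atTop
      (𝓝 (∑ p ∈ U, (1 / p : ℝ) - 0)) :=
    tendsto_const_nhds.sub (tendsto_const_div_atTop_nhds_zero_nat _)
  rw [sub_zero] at hl
  refine le_of_tendsto_of_tendsto hl hlim ?_
  filter_upwards [eventually_gt_atTop 0] with n hn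
  have hn' : (0:ℝ) < n := by exact_mod_cast hn
  simp only [Function.comp]
  rw [le_div_iff₀ hn', sub_mul, div_mul_cancel₀ _ hn'.ne']
  have k := key n
  have k' : ((∑ p ∈ U, n / p : ℕ) : ℝ) ≤ _ := Nat.cast_le.2 k
  refine le_trans ?_ k'
  push_cast
  rw [Finset.sum_mul, Finset.card_eq_sum_ones]
  push_cast
  rw [← Finset.sum_sub_distrib]
  apply Finset.sum_le_sum
  intro p hp
  have hpp := (hP' p (Finset.mem_filter.1 hp).2).1.pos
  have h6 : n < (n / p + 1) * p := by
    rw [mul_comm]; exact Nat.lt_mul_div_succ n hpp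
  have h7 : (n : ℝ) < ((n / p : ℕ) + 1) * p := by exact_mod_cast h6
  have hp0 : (0:ℝ) < p := by exact_mod_cast hpp
  rw [one_div, inv_mul_eq_div, sub_le_iff_le_add, div_le_iff₀ hp0]
  exact h7.le

lemma sum_ideals_le {K : Type*} [Field K] [NumberField K] (C : ℝ)
    (hC : ∀ T : Finset (Ideal (𝓞 K)), (∀ P ∈ T, Prime P) →
      ∑ P ∈ T, (Ideal.absNorm P : ℝ)⁻¹ ≤ C) (F : Finset (Ideal (𝓞 K))) (hF : ∀ I ∈ F, I ≠ 0) :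
    ∑ I ∈ F, (Ideal.absNorm I : ℝ)⁻¹ ≤ Real.exp (2 * C) := by
  classical
  let T : Finset (Ideal (𝓞 K)) := F.biUnion fun I => (normalizedFactors I).toFinset
  have hT : ∀ P ∈ T, Prime P := by
    intro P hP
    obtain ⟨I, -, hI⟩ := Finset.mem_biUnion.1 hP
    exact prime_of_normalized_factor P (Multiset.mem_toFinset.1 hI)
  let E : ℕ := F.sup fun I => Multiset.card (normalizedFactors I)
  let c : Ideal (𝓞 K) → (T → ℕ) := fun I P => (normalizedFactors I).count P.1
  have hprod : ∀ I ∈ F, I = ∏ P : T, P.1 ^ c I P := by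
    intro I hI
    have h1 : (normalizedFactors I).prod = I := by
      rw [prod_normalizedFactors_eq (hF I hI)]; simp
    conv_lhs => rw [← h1]
    rw [Finset.prod_coe_sort T (fun P => P ^ (normalizedFactors I).count P)]
    apply Finset.prod_multiset_count_of_subset
    exact Finset.subset_biUnion_of_mem (fun I => (normalizedFactors I).toFinset) hI
  have hinj : Set.InjOn c F := by
    intro I hI J hJ h
    rw [hprod I hI, hprod J hJ, h]
  have hval : ∀ I ∈ F, (Ideal.absNorm I : ℝ)⁻¹ =
      ∏ P : T, ((Ideal.absNorm P.1 : ℝ)⁻¹) ^ c I P := by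
    intro I hI
    conv_lhs => rw [hprod I hI]
    simp [map_prod]
  calc ∑ I ∈ F, (Ideal.absNorm I : ℝ)⁻¹
      = ∑ I ∈ F, ∏ P : T, ((Ideal.absNorm P.1 : ℝ)⁻¹) ^ c I P := Finset.sum_congr rfl hval
    _ = ∑ x ∈ F.image c, ∏ P : T, ((Ideal.absNorm P.1 : ℝ)⁻¹) ^ x P :=
        (Finset.sum_image (f := fun x : T → ℕ => ∏ P : T, ((Ideal.absNorm P.1 : ℝ)⁻¹) ^ x P) hinj).symm
    _ ≤ ∑ x ∈ Fintype.piFinset (fun _ : T => Finset.range (E + 1)),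
          ∏ P : T, ((Ideal.absNorm P.1 : ℝ)⁻¹) ^ x P := by
        apply Finset.sum_le_sum_of_subset_of_nonneg
        · intro x hx
          obtain ⟨I, hI, rfl⟩ := Finset.mem_image.1 hx
          rw [Fintype.mem_piFinset]
          intro P
          rw [Finset.mem_range, Nat.lt_succ_iff]
          exact (Multiset.count_le_card _ _).trans
            (Finset.le_sup (f := fun I => Multiset.card (normalizedFactors I)) hI)
        · intros; positivity
    _ = ∏ P : T, ∑ e ∈ Finset.range (E + 1), ((Ideal.absNorm P.1 : ℝ)⁻¹) ^ e :=
        (Finset.prod_univ_sum (fun _ : T => Finset.range (E + 1))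
          (fun (P : T) (e : ℕ) => ((Ideal.absNorm P.1 : ℝ)⁻¹) ^ e)).symm
    _ ≤ ∏ P : T, Real.exp (2 * (Ideal.absNorm P.1 : ℝ)⁻¹) := by
        apply Finset.prod_le_prod
        · intros; positivity
        · intro P _
          have hPp := hT P.1 P.2
          have h2 : 2 ≤ Ideal.absNorm P.1 := by
            have h0 : Ideal.absNorm P.1 ≠ 0 := by
              rw [Ne, Ideal.absNorm_eq_zero_iff]; exact hPp.ne_zero
            have h1 : Ideal.absNorm P.1 ≠ 1 := by
              rw [Ne, Ideal.absNorm_eq_one_iff]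
              intro h; exact hPp.not_isUnit (by rw [h]; exact Ideal.isUnit_iff.2 rfl)
            omega
          have h3 : (2:ℝ) ≤ Ideal.absNorm P.1 := by exact_mod_cast h2
          set w := (Ideal.absNorm P.1 : ℝ)⁻¹ with hw
          have hw0 : 0 ≤ w := by positivity
          have hw1 : w ≤ 1/2 := by rw [hw, one_div]; exact inv_anti₀ (by norm_num) h3
          have hg := Summable.sum_le_tsum (Finset.range (E+1)) (fun e _ => pow_nonneg hw0 e)
            (summable_geometric_of_lt_one hw0 (by linarith))
          rw [tsum_geometric_of_lt_one hw0 (by linarith)] at hg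
          refine hg.trans ?_
          have h5 : (1 - w)⁻¹ ≤ 2 * w + 1 := by
            rw [inv_le_iff_one_le_mul₀ (by linarith)]
            nlinarith
          exact h5.trans (Real.add_one_le_exp _)
    _ = Real.exp (2 * ∑ P ∈ T, (Ideal.absNorm P : ℝ)⁻¹) := by
        rw [← Real.exp_sum, Finset.mul_sum,
          Finset.sum_coe_sort T (fun P => 2 * (Ideal.absNorm P : ℝ)⁻¹)]
    _ ≤ _ := Real.exp_le_exp.2 (by linarith [hC T hT])

lemma primes_unbounded (K : Type*) [Field K] [NumberField K] (C : ℝ)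
    (hC : ∀ T : Finset (Ideal (𝓞 K)), (∀ P ∈ T, Prime P) →
      ∑ P ∈ T, (Ideal.absNorm P : ℝ)⁻¹ ≤ C) : False := by
  classical
  have hs : Summable (fun I : (Ideal (𝓞 K))⁰ => (Ideal.absNorm (I : Ideal (𝓞 K)) : ℝ)⁻¹) := by
    refine summable_of_sum_le (c := Real.exp (2 * C)) (fun _ => by positivity) fun u => ?_
    have := sum_ideals_le C hC (u.map (Function.Embedding.subtype _)) (by
      intro I hI
      obtain ⟨J, -, rfl⟩ := Finset.mem_map.1 hI
      exact nonZeroDivisors.ne_zero J.2)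
    simpa using this
  have hlim := (Ideal.tendsto_norm_le_div_atTop₀ K).comp (tendsto_natCast_atTop_atTop (R := ℝ))
  have hpos := dedekindZeta_residue_pos K
  rw [← dedekindZeta_residue_def] at hlim
  set ρ := dedekindZeta_residue K
  obtain ⟨s, hs⟩ := summable_iff_vanishing_norm.1 hs (ρ / 2) (by linarith)
  have hl : Tendsto (fun n : ℕ => ρ / 2 + (s.card : ℝ) / n) atTop (𝓝 (ρ / 2 + 0)) :=
    tendsto_const_nhds.add (tendsto_const_div_atTop_nhds_zero_nat _)
  have hfinal : ρ ≤ ρ / 2 + 0 := by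
    refine le_of_tendsto_of_tendsto hlim hl ?_
    filter_upwards [eventually_gt_atTop 0] with n hn
    have hn' : (0:ℝ) < n := by exact_mod_cast hn
    simp only [Function.comp, Nat.cast_le]
    rw [div_le_iff₀ hn', add_mul, div_mul_cancel₀ _ hn'.ne']
    have hfin := Ideal.finite_setOfPred_absNorm_le₀ (S := 𝓞 K) n
    set A := hfin.toFinset with hA
    have hcard : Nat.card {I : (Ideal (𝓞 K))⁰ // Ideal.absNorm (I : Ideal (𝓞 K)) ≤ n} = A.card :=
      Nat.card_eq_card_finite_toFinset hfin
    rw [hcard]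
    have h1 := hs (A \ s) Finset.sdiff_disjoint
    have h2 : ((A \ s).card : ℝ) / n ≤ ∑ I ∈ A \ s, (Ideal.absNorm (I : Ideal (𝓞 K)) : ℝ)⁻¹ := by
      rw [Finset.card_eq_sum_ones, Nat.cast_sum, Finset.sum_div]
      apply Finset.sum_le_sum
      intro I hI
      have h3 : Ideal.absNorm (I : Ideal (𝓞 K)) ≤ n := by
        have := (Finset.mem_sdiff.1 hI).1
        rw [hA, Set.Finite.mem_toFinset] at this
        exact this
      have h4 := Ideal.absNorm_pos_of_nonZeroDivisors I
      rw [Nat.cast_one, one_div]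
      exact inv_anti₀ (by exact_mod_cast h4) (by exact_mod_cast h3)
    have h5 := (h2.trans (le_abs_self _)).trans_lt h1
    rw [div_lt_iff₀ hn'] at h5
    have h6 : A.card ≤ (A \ s).card + s.card := by
      have := Finset.le_card_sdiff s A; omega
    have h7 : (A.card : ℝ) ≤ (A \ s).card + s.card := by exact_mod_cast h6
    linarith
  linarith

/-- number of primes above `p` -/
lemma card_above {K : Type*} [Field K] [NumberField K] {p : ℕ} (hp : p.Prime)
    (T : Finset (Ideal (𝓞 K))) (hT : ∀ P ∈ T, Prime P ∧ (p : 𝓞 K) ∈ P) :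
    T.card ≤ Module.finrank ℤ (𝓞 K) := by
  have h1 : ∏ P ∈ T, P ∣ Ideal.span {(p : 𝓞 K)} :=
    Finset.prod_primes_dvd _ (fun P hP => (hT P hP).1) fun P hP => by
      rw [Ideal.dvd_span_singleton]; exact (hT P hP).2
  have h2 := map_dvd Ideal.absNorm h1
  rw [Ideal.absNorm_span_natCast, map_prod] at h2
  have h3 : p ^ T.card ∣ ∏ P ∈ T, Ideal.absNorm P := by
    rw [← Finset.prod_const]
    apply Finset.prod_dvd_prod_of_dvd
    intro P hP
    obtain ⟨hP, hpP⟩ := hT P hP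
    have h4 : Ideal.absNorm P ∣ p ^ Module.finrank ℤ (𝓞 K) := by
      rw [← Ideal.absNorm_span_natCast (S := 𝓞 K)]
      exact map_dvd _ (Ideal.dvd_span_singleton.2 hpP)
    obtain ⟨k, -, hk⟩ := (Nat.dvd_prime_pow hp).1 h4
    rw [hk]
    refine dvd_pow_self _ ?_
    rintro rfl
    rw [pow_zero, Ideal.absNorm_eq_one_iff] at hk
    exact hP.not_isUnit (by rw [hk]; exact Ideal.isUnit_iff.2 rfl)
  exact (Nat.pow_dvd_pow_iff_le_right hp.one_lt).1 (h3.trans h2)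

lemma not_summable_one (K : Type*) [Field K] [NumberField K]
    (h : Summable (Set.indicator {p : ℕ | p.Prime ∧ ∃ Q : Ideal (𝓞 K), Ideal.absNorm Q = p}
      (fun p => (1 / p : ℝ)))) : False := by
  classical
  set S := {p : ℕ | p.Prime ∧ ∃ Q : Ideal (𝓞 K), Ideal.absNorm Q = p}
  let g : ℕ → ℝ := fun p => S.indicator (fun p => (1 / p : ℝ)) p + 1 / (p : ℝ) ^ 2
  have hg0 : ∀ p, 0 ≤ g p := fun p =>
    add_nonneg (Set.indicator_nonneg (fun _ _ => by positivity) _) (by positivity)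
  have hg : Summable g := h.add (Real.summable_one_div_nat_pow.2 (by norm_num))
  have hex : ∀ P : Ideal (𝓞 K), ∃ p : ℕ, Prime P →
      p.Prime ∧ (p : 𝓞 K) ∈ P ∧ (Ideal.absNorm P : ℝ)⁻¹ ≤ g p := by
    intro P
    by_cases hP : Prime P
    · have hPp : P.IsPrime := Ideal.isPrime_of_prime hP
      have hPm : P.IsMaximal := hPp.isMaximal hP.ne_zero
      obtain ⟨p, k, hk, hpP, hp, hN⟩ := Ideal.exists_prime_and_absNorm_eq_pow P
      refine ⟨p, fun _ => ⟨hp, hpP, ?_⟩⟩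
      rcases Nat.lt_or_ge k 2 with h2 | h2
      · have : k = 1 := by omega
        subst this
        rw [pow_one] at hN
        have hpS : p ∈ S := ⟨hp, P, hN⟩
        simp only [g]
        rw [Set.indicator_of_mem hpS, hN, one_div]
        have : 0 ≤ 1 / (p:ℝ)^2 := by positivity
        linarith
      · have h3 : (Ideal.absNorm P : ℝ)⁻¹ ≤ 1 / (p:ℝ)^2 := by
          have hp1 : (1:ℝ) ≤ p := by exact_mod_cast hp.one_lt.le
          rw [hN, one_div]; push_cast
          exact inv_anti₀ (by positivity) (pow_le_pow_right₀ hp1 h2)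
        have : 0 ≤ S.indicator (fun p => (1 / p : ℝ)) p :=
          Set.indicator_nonneg (fun _ _ => by positivity) _
        simp only [g]
        linarith
    · exact ⟨0, fun h => absurd h hP⟩
  choose π hπ using hex
  refine primes_unbounded K (Module.finrank ℤ (𝓞 K) * ∑' p, g p) fun T hT => ?_
  calc ∑ P ∈ T, (Ideal.absNorm P : ℝ)⁻¹ ≤ ∑ P ∈ T, g (π P) :=
        Finset.sum_le_sum fun P hP => (hπ P (hT P hP)).2.2
    _ = ∑ p ∈ T.image π, (T.filter fun P => π P = p).card • g p := Finset.sum_comp g π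
    _ ≤ ∑ p ∈ T.image π, (Module.finrank ℤ (𝓞 K) : ℝ) * g p := by
        apply Finset.sum_le_sum
        intro p hp
        obtain ⟨P, hP, rfl⟩ := Finset.mem_image.1 hp
        rw [nsmul_eq_mul]
        refine mul_le_mul_of_nonneg_right ?_ (hg0 _)
        refine Nat.cast_le.2 (card_above (hπ P (hT P hP)).1 _ ?_)
        intro Q hQ
        obtain ⟨hQ, hQe⟩ := Finset.mem_filter.1 hQ
        refine ⟨hT Q hQ, ?_⟩
        rw [← hQe]
        exact (hπ Q (hT Q hQ)).2.1
    _ = (Module.finrank ℤ (𝓞 K) : ℝ) * ∑ p ∈ T.image π, g p := by rw [Finset.mul_sum]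
    _ ≤ _ := mul_le_mul_of_nonneg_left (hg.sum_le_tsum _ fun p _ => hg0 p) (by positivity)

lemma two_of_one {K L : Type*} [Field K] [NumberField K] [Field L] [NumberField L]
    (f g : K →+* L) (hfg : f ≠ g)
    (h1 : ∀ p : ℕ, p.Prime → Nonempty (𝓞 K →+* ZMod p)) : False := by
  classical
  have hα : ∃ α : 𝓞 K, RingOfIntegers.mapRingHom f α ≠ RingOfIntegers.mapRingHom g α := by
    by_contra! hcon
    apply hfg
    refine IsFractionRing.ringHom_ext (A := 𝓞 K) fun x => ?_
    exact congrArg (fun y : 𝓞 L => (y : L)) (hcon x)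
  obtain ⟨α, hα⟩ := hα
  set δ : 𝓞 L := RingOfIntegers.mapRingHom f α - RingOfIntegers.mapRingHom g α with hδ
  have hδ0 : δ ≠ 0 := sub_ne_zero.2 hα
  have hN0 : (Algebra.norm ℤ δ).natAbs ≠ 0 := by
    rw [Int.natAbs_ne_zero]; exact Algebra.norm_ne_zero_iff.2 hδ0
  have hs := summable_two h1
  apply not_summable_one L
  rw [← summable_nat_add_iff ((Algebra.norm ℤ δ).natAbs + 1)] at hs ⊢
  refine Summable.of_nonneg_of_le
    (fun p => Set.indicator_nonneg (fun _ _ => by positivity) _) (fun p => ?_) hs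
  set q := p + ((Algebra.norm ℤ δ).natAbs + 1) with hq
  by_cases hmem : q ∈ {p : ℕ | p.Prime ∧ ∃ Q : Ideal (𝓞 L), Ideal.absNorm Q = p}
  swap
  · rw [Set.indicator_of_notMem hmem]
    exact Set.indicator_nonneg (fun _ _ => by positivity) _
  have hmem2 : q ∈ {p : ℕ | p.Prime ∧ ∃ φ ψ : 𝓞 K →+* ZMod p, φ ≠ ψ} := by
    obtain ⟨hqp, Q, hQ⟩ := hmem
    obtain ⟨φ, hφ⟩ := hom_of_norm hqp Q hQ
    refine ⟨hqp, φ.comp (RingOfIntegers.mapRingHom f), φ.comp (RingOfIntegers.mapRingHom g), ?_⟩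
    intro heq
    have h2 : φ δ = 0 := by
      rw [hδ, map_sub, sub_eq_zero]
      exact RingHom.congr_fun heq α
    have h3 : δ ∈ Q := by rw [← hφ]; exact h2
    have h4 := Ideal.absNorm_dvd_norm_of_mem h3
    rw [hQ, Int.natCast_dvd] at h4
    have := Nat.le_of_dvd (Nat.pos_of_ne_zero hN0) h4
    omega
  rw [Set.indicator_of_mem hmem, Set.indicator_of_mem hmem2]

lemma hom_of_padic {K : Type*} [Field K] [NumberField K] (p : ℕ) [Fact p.Prime]
    (f : K →+* ℚ_[p]) : Nonempty (𝓞 K →+* ZMod p) := by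
  have hint : ∀ x : 𝓞 K, f x ∈ (algebraMap ℤ_[p] ℚ_[p]).range := by
    intro x
    have h1 : IsIntegral ℤ (f x) := (RingOfIntegers.isIntegral_coe x).map (f.toIntAlgHom)
    have h2 : IsIntegral ℤ_[p] (f x) := h1.tower_top
    exact IsIntegrallyClosed.isIntegral_iff.1 h2
  let e : ℤ_[p] ≃+* (algebraMap ℤ_[p] ℚ_[p]).range :=
    RingEquiv.ofBijective (algebraMap ℤ_[p] ℚ_[p]).rangeRestrict
      ⟨fun x y hxy => IsFractionRing.injective ℤ_[p] ℚ_[p] (congrArg (fun z : (algebraMap ℤ_[p] ℚ_[p]).range => (z : ℚ_[p])) hxy),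
        RingHom.rangeRestrict_surjective _⟩
  exact ⟨(PadicInt.toZMod.comp e.symm.toRingHom).comp
    ((f.comp (algebraMap (𝓞 K) K)).codRestrict _ hint)⟩

/-- Claim 2.4: a point of affine `n`-space with algebraic coordinates which, for every
prime `p`, becomes a `ℚ_p`-rational point under some field isomorphism `ℂ ≃ ℚ̄_p`,
is already a `ℚ`-rational point. -/
theorem stmt_0 (n : ℕ) (v : Fin n → ℂ) (halg : ∀ i, IsAlgebraic ℚ (v i))
    (h : ∀ (p : ℕ) [Fact p.Prime],
      ∃ σ : ℂ ≃+* AlgebraicClosure ℚ_[p],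
        ∀ i, σ (v i) ∈ Set.range (algebraMap ℚ_[p] (AlgebraicClosure ℚ_[p]))) :
    ∀ i, v i ∈ Set.range ((↑) : ℚ → ℂ) := by
  intro i
  let K := IntermediateField.adjoin ℚ {v i}
  have hfd : FiniteDimensional ℚ K :=
    IntermediateField.adjoin.finiteDimensional (halg i).isIntegral
  have hnf : NumberField K := { to_charZero := inferInstance, to_finiteDimensional := hfd }
  have h1 : ∀ p : ℕ, p.Prime → Nonempty (𝓞 K →+* ZMod p) := by
    intro p hp
    have : Fact p.Prime := ⟨hp⟩
    obtain ⟨σ, hσ⟩ := h p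
    let a : ℚ_[p] →ₐ[ℚ] AlgebraicClosure ℚ_[p] :=
      (algebraMap ℚ_[p] (AlgebraicClosure ℚ_[p])).toRatAlgHom
    let s : ℂ →ₐ[ℚ] AlgebraicClosure ℚ_[p] := (σ : ℂ →+* AlgebraicClosure ℚ_[p]).toRatAlgHom
    have hle : K ≤ a.fieldRange.comap s := by
      rw [IntermediateField.adjoin_le_iff, Set.singleton_subset_iff]
      exact hσ i
    have hmem : ∀ x : K, (s.comp K.val) x ∈ a.range := fun x => hle x.2
    exact hom_of_padic p (((AlgEquiv.ofInjectiveField a).symm.toAlgHom.comp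
      ((s.comp K.val).codRestrict a.range hmem)).toRingHom)
  by_cases hr : Module.finrank ℚ K = 1
  · rw [IntermediateField.finrank_adjoin_simple_eq_one_iff, IntermediateField.mem_bot] at hr
    obtain ⟨q, hq⟩ := hr
    exact ⟨q, by simpa using hq⟩
  exfalso
  have hcard : 1 < Fintype.card (K →ₐ[ℚ] ℂ) := by
    rw [AlgHom.card]
    have : 0 < Module.finrank ℚ K := Module.finrank_pos
    omega
  obtain ⟨f, g, hfg⟩ := Fintype.one_lt_card_iff.1 hcard
  let L := f.fieldRange ⊔ g.fieldRange
  have hLf : FiniteDimensional ℚ f.fieldRange :=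
    inferInstanceAs (FiniteDimensional ℚ (LinearMap.range f.toLinearMap))
  have hLg : FiniteDimensional ℚ g.fieldRange :=
    inferInstanceAs (FiniteDimensional ℚ (LinearMap.range g.toLinearMap))
  have hL : FiniteDimensional ℚ L := IntermediateField.finiteDimensional_sup _ _
  have hnL : NumberField L := { to_charZero := inferInstance, to_finiteDimensional := hL }
  have hf : ∀ x, (f : K →+* ℂ) x ∈ L := fun x =>
    (le_sup_left : f.fieldRange ≤ L) (AlgHom.mem_fieldRange.2 ⟨x, rfl⟩)
  have hg : ∀ x, (g : K →+* ℂ) x ∈ L := fun x =>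
    (le_sup_right : g.fieldRange ≤ L) (AlgHom.mem_fieldRange.2 ⟨x, rfl⟩)
  refine two_of_one ((f : K →+* ℂ).codRestrict L hf) ((g : K →+* ℂ).codRestrict L hg) ?_ h1
  intro heq
  apply hfg
  ext1 x
  exact congrArg (fun y : L => (y : ℂ)) (RingHom.congr_fun heq x)
end

section
/- Let f ∈ ℤ[X] be a monic polynomial that is irreducible (over ℤ, equivalently over ℚ). If for every prime number p the reduction of f modulo p has a root in ℤ/pℤ, then f has degree 1. -/
open NumberField Ideal Filter Topology nonZeroDivisors

lemma aux_card_bound (K : Type*) [Field K] [NumberField K] :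
    ∃ C : ℝ, ∀ N : ℕ, 0 < N → ∀ W : Finset (Ideal (𝓞 K)), (∀ I ∈ W, absNorm I ≤ N) →
      (W.card : ℝ) ≤ C * N := by
  obtain ⟨C, hC⟩ := ((Ideal.tendsto_norm_le_div_atTop K).comp
    tendsto_natCast_atTop_atTop).bddAbove_range
  refine ⟨C, fun N hN W hW => ?_⟩
  have h1 := hC ⟨N, rfl⟩
  simp only [Function.comp_apply, Nat.cast_le] at h1
  rw [div_le_iff₀ (by positivity)] at h1
  refine le_trans ?_ h1
  have hf : Finite {I : Ideal (𝓞 K) // absNorm I ≤ N} :=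
    (Ideal.finite_setOfPred_absNorm_le (S := 𝓞 K) N).to_subtype
  have : Nat.card W ≤ Nat.card {I : Ideal (𝓞 K) // absNorm I ≤ N} :=
    Nat.card_le_card_of_injective (fun I => ⟨I.1, hW I.1 I.2⟩) (by
      intro a b hab
      have := congrArg Subtype.val hab
      exact Subtype.ext this)
  simpa using this

lemma aux_not_summable (K : Type*) [Field K] [NumberField K] :
    ¬ Summable (fun I : (Ideal (𝓞 K))⁰ => (1 : ℝ) / absNorm (I : Ideal (𝓞 K))) := by
  intro hs
  have h1 := (Ideal.tendsto_norm_le_div_atTop₀ K).comp (tendsto_natCast_atTop_atTop (R := ℝ))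
  classical
  have h2 : Tendsto (fun N : ℕ => ∑' I : (Ideal (𝓞 K))⁰,
      if absNorm (I : Ideal (𝓞 K)) ≤ N then (1 : ℝ) / N else 0) atTop
      (𝓝 (∑' I : (Ideal (𝓞 K))⁰, (0 : ℝ))) := by
    refine tendsto_tsum_of_dominated_convergence hs ?_ ?_
    · intro I
      refine squeeze_zero (g := fun N : ℕ => (1 : ℝ) / N) ?_ ?_ tendsto_one_div_atTop_nhds_zero_nat
      · intro N; split_ifs <;> positivity
      · intro N; split_ifs <;> [exact le_rfl; positivity]
    · filter_upwards with N I
      split_ifs with h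
      · have h0 := absNorm_pos_of_nonZeroDivisors I
        rw [Real.norm_of_nonneg (by positivity)]
        gcongr
      · simp; 
  rw [tsum_zero] at h2
  have h3 : (fun N : ℕ => ∑' I : (Ideal (𝓞 K))⁰,
      if absNorm (I : Ideal (𝓞 K)) ≤ N then (1 : ℝ) / N else 0) =
      ((fun s : ℝ => (Nat.card {I : (Ideal (𝓞 K))⁰ // absNorm (I : Ideal (𝓞 K)) ≤ s} : ℝ) / s) ∘
        (Nat.cast : ℕ → ℝ)) := by
    funext N
    have hf := Ideal.finite_setOfPred_absNorm_le₀ (S := 𝓞 K) N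
    rw [tsum_eq_sum (s := hf.toFinset) (by intro I hI; simp at hI; simp [hI])]
    rw [Finset.sum_congr rfl (g := fun _ => (1 : ℝ) / N) (by intro I hI; simp at hI; simp [hI])]
    simp only [Finset.sum_const, Function.comp_apply, Nat.cast_le, nsmul_eq_mul]
    rw [← Set.ncard_eq_toFinset_card _ hf, mul_one_div]
    rfl
  rw [h3] at h2
  have := tendsto_nhds_unique h1 h2
  exact (NumberField.dedekindZeta_residue_ne_zero K) this

lemma aux_smooth (K : Type*) [Field K] [NumberField K] (W : Finset (Ideal (𝓞 K)))
    (hW : ∀ I ∈ W, ∀ J, J ∣ I → J ∈ W)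
    (S : Finset (Ideal (𝓞 K))) (hS : ∀ P ∈ S, P.IsPrime ∧ P ≠ ⊥) :
    ∀ V ⊆ W, (∀ I ∈ V, ∀ P, P.IsPrime → P ∣ I → P ∈ S) →
      ∑ I ∈ V, (1 : ℝ) / absNorm I ≤ ∏ P ∈ S, Real.exp (2 * (1 / absNorm P)) := by
  classical
  induction S using Finset.induction_on with
  | empty =>
    intro V hV h
    have : V ⊆ {⊤} := by
      intro I hI
      by_contra hne
      obtain ⟨P, hP, hle⟩ := Ideal.exists_le_maximal I (by simpa using hne)
      exact absurd (h I hI P hP.isPrime (Ideal.dvd_iff_le.mpr hle)) (by simp)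
    calc _ ≤ ∑ I ∈ ({⊤} : Finset (Ideal (𝓞 K))), (1 : ℝ) / absNorm I :=
          Finset.sum_le_sum_of_subset_of_nonneg this (by intros; positivity)
      _ = 1 := by simp
      _ ≤ _ := by simp
  | insert P S hPS ih =>
    have ih := ih (fun Q hQ => hS Q (Finset.mem_insert_of_mem hQ))
    obtain ⟨hPp, hP0⟩ := hS P (Finset.mem_insert_self _ _)
    -- the full set
    suffices H : ∑ I ∈ W with (∀ Q : Ideal (𝓞 K), Q.IsPrime → Q ∣ I → Q ∈ insert P S),
        (1 : ℝ) / absNorm I ≤ ∏ P ∈ insert P S, Real.exp (2 * (1 / absNorm P)) by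
      intro V hV h
      refine le_trans (Finset.sum_le_sum_of_subset_of_nonneg ?_ (by intros; positivity)) H
      intro I hI
      simp only [Finset.mem_filter]
      exact ⟨hV hI, h I hI⟩
    set A := {I ∈ W | ∀ Q : Ideal (𝓞 K), Q.IsPrime → Q ∣ I → Q ∈ insert P S} with hA
    have h1 : ∑ I ∈ A with ¬ P ∣ I, (1 : ℝ) / absNorm I ≤
        ∏ P ∈ S, Real.exp (2 * (1 / absNorm P)) := by
      apply ih
      · exact (Finset.filter_subset _ _).trans (Finset.filter_subset _ _)
      · intro I hI Q hQ hd
        simp only [hA, Finset.mem_filter] at hI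
        have := hI.1.2 Q hQ hd
        rw [Finset.mem_insert] at this
        rcases this with rfl | h
        · exact absurd hd hI.2
        · exact h
    have h2 : ∑ I ∈ A with P ∣ I, (1 : ℝ) / absNorm I ≤
        (1 / absNorm P) * ∑ I ∈ A, (1 : ℝ) / absNorm I := by
      have : {I ∈ A | P ∣ I} ⊆ A.image (P * ·) := by
        intro I hI
        simp only [hA, Finset.mem_filter] at hI
        obtain ⟨⟨hIW, hIp⟩, J, rfl⟩ := hI
        refine Finset.mem_image.mpr ⟨J, ?_, rfl⟩
        simp only [hA, Finset.mem_filter]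
        exact ⟨hW _ hIW J (dvd_mul_left _ _), fun Q hQ hd => hIp Q hQ (hd.trans (dvd_mul_left _ _))⟩
      refine le_trans (Finset.sum_le_sum_of_subset_of_nonneg this (by intros; positivity)) ?_
      rw [Finset.sum_image (fun a _ b _ hab => mul_left_cancel₀ (by simpa using hP0) hab),
        Finset.mul_sum]
      apply le_of_eq
      refine Finset.sum_congr rfl fun I _ => ?_
      rw [map_mul]; push_cast; rw [one_div_mul_one_div]
    have h3 := Finset.sum_filter_add_sum_filter_not A (fun I => P ∣ I)
      (fun I => (1 : ℝ) / absNorm I)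
    have hN : (2 : ℝ) ≤ absNorm P := by
      have h0 : absNorm P ≠ 0 := by rwa [Ne, absNorm_eq_zero_iff]
      have h1 : absNorm P ≠ 1 := by rw [Ne, absNorm_eq_one_iff]; exact hPp.ne_top
      exact_mod_cast (by omega : 2 ≤ absNorm P)
    rw [Finset.prod_insert hPS]
    set u : ℝ := 1 / absNorm P with hu
    have hu0 : 0 ≤ u := by positivity
    have hu2 : u ≤ 1 / 2 := by rw [hu]; gcongr
    set Z := ∑ I ∈ A, (1 : ℝ) / absNorm I
    have hZ : 0 ≤ Z := Finset.sum_nonneg (by intros; positivity)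
    have hexp : 2 * u + 1 ≤ Real.exp (2 * u) := Real.add_one_le_exp _
    set R := ∏ P ∈ S, Real.exp (2 * (1 / (absNorm P : ℝ)))
    have hR : (1 - u) * Z ≤ R := by linarith
    have hR0 : 0 ≤ R := Finset.prod_nonneg (by intros; positivity)
    calc Z ≤ (2 * u + 1) * ((1 - u) * Z) := by nlinarith [mul_nonneg hu0 hZ, mul_nonneg (mul_nonneg hu0 hZ) (sub_nonneg.mpr hu2)]
      _ ≤ (2 * u + 1) * R := by gcongr
      _ ≤ _ := by gcongr

lemma aux_primes (K : Type*) [Field K] [NumberField K] (M : ℝ)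
    (hM : ∀ S : Finset (Ideal (𝓞 K)), (∀ P ∈ S, P.IsPrime ∧ P ≠ ⊥) →
      ∑ P ∈ S, (1 : ℝ) / absNorm P ≤ M) : False := by
  classical
  apply aux_not_summable K
  refine summable_of_sum_le (c := Real.exp (2 * M)) (fun _ => by positivity) fun U => ?_
  obtain ⟨N, hN⟩ : ∃ N : ℕ, ∀ I ∈ U, absNorm (I : Ideal (𝓞 K)) ≤ N :=
    ⟨U.sup fun I => absNorm (I : Ideal (𝓞 K)), fun I hI =>
      Finset.le_sup (f := fun I : (Ideal (𝓞 K))⁰ => absNorm (I : Ideal (𝓞 K))) hI⟩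
  have hf := Ideal.finite_setOfPred_absNorm_le (S := 𝓞 K) N
  let W := hf.toFinset.filter (· ≠ ⊥)
  have hmem : ∀ I, I ∈ W ↔ absNorm I ≤ N ∧ I ≠ ⊥ := by intro I; simp [W]
  let S := W.filter (fun P => P.IsPrime)
  have hS : ∀ P ∈ S, P.IsPrime ∧ P ≠ ⊥ := by
    intro P hP
    simp only [S, Finset.mem_filter, hmem] at hP
    exact ⟨hP.2, hP.1.2⟩
  have hWd : ∀ I ∈ W, ∀ J, J ∣ I → J ∈ W := by
    intro I hI J hJ
    rw [hmem] at hI ⊢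
    obtain ⟨L, rfl⟩ := hJ
    have h0 : absNorm (J * L) ≠ 0 := by rw [Ne, absNorm_eq_zero_iff]; exact hI.2
    refine ⟨(Nat.le_of_dvd (Nat.pos_of_ne_zero h0) (by simp)).trans hI.1, ?_⟩
    rintro rfl
    simp at hI
  have key := aux_smooth K W hWd S hS
    (U.image (fun I : (Ideal (𝓞 K))⁰ => (I : Ideal (𝓞 K)))) (by
      intro I hI
      obtain ⟨J, hJ, rfl⟩ := Finset.mem_image.mp hI
      rw [hmem]
      exact ⟨hN J hJ, by simpa using nonZeroDivisors.ne_zero J.2⟩) (by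
      intro I hI P hP hd
      obtain ⟨J, hJ, rfl⟩ := Finset.mem_image.mp hI
      simp only [S, Finset.mem_filter]
      refine ⟨hWd _ ?_ P hd, hP⟩
      rw [hmem]
      exact ⟨hN J hJ, by simpa using nonZeroDivisors.ne_zero J.2⟩)
  rw [Finset.sum_image (fun a _ b _ h => Subtype.ext h), ← Real.exp_sum, ← Finset.mul_sum] at key
  refine key.trans (Real.exp_le_exp.mpr ?_)
  have := hM S hS
  linarith

lemma aux_fiber (K : Type*) [Field K] [NumberField K] (p : ℕ) (hp : p.Prime)
    (S : Finset (Ideal (𝓞 K)))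
    (hS : ∀ P ∈ S, P.IsPrime ∧ P ≠ ⊥ ∧ (p : 𝓞 K) ∈ P ∧ p ≤ absNorm P) :
    S.card ≤ Module.finrank ℤ (𝓞 K) := by
  have h1 : ∏ P ∈ S, P ∣ span {(p : 𝓞 K)} := by
    refine Finset.prod_primes_dvd _ (fun P hP => ?_) (fun P hP => ?_)
    · exact Ideal.prime_of_isPrime (hS P hP).2.1 (hS P hP).1
    · rw [Ideal.dvd_iff_le, Ideal.span_singleton_le_iff_mem]
      exact (hS P hP).2.2.1
  have h2 := map_dvd absNorm h1
  rw [absNorm_span_natCast, map_prod] at h2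
  have h3 := Nat.le_of_dvd (pow_pos hp.pos _) h2
  have h4 : p ^ S.card ≤ ∏ P ∈ S, absNorm P :=
    Finset.pow_card_le_prod _ _ _ (fun P hP => (hS P hP).2.2.2)
  exact (Nat.pow_le_pow_iff_right hp.one_lt).mp (h4.trans h3)

/-- If `T` contains all rational primes (outside a finite set) below a degree one prime,
then the reciprocals of `T` are not summable. -/
lemma aux_B (K : Type*) [Field K] [NumberField K] (T : Set ℕ)
    (hT : ∀ P : Ideal (𝓞 K), P.IsPrime → P ≠ ⊥ → (absNorm P).Prime → absNorm P ∈ T)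
    (hs : Summable (T.indicator fun p : ℕ => (1 : ℝ) / p)) : False := by
  classical
  let g : ℕ → ℝ := fun p => T.indicator (fun p : ℕ => (1 : ℝ) / p) p + 1 / (p : ℝ) ^ 2
  have hg : Summable g := hs.add (Real.summable_one_div_nat_pow.mpr one_lt_two)
  have hg0 : ∀ p, 0 ≤ g p := fun p =>
    add_nonneg (Set.indicator_nonneg (by intros; positivity) _) (by positivity)
  let π : Ideal (𝓞 K) → ℕ := fun P => (absNorm P).minFac
  let d := Module.finrank ℤ (𝓞 K)
  refine aux_primes K (d * ∑' p, g p) fun S hS => ?_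
  have hfac : ∀ P ∈ S, (π P).Prime ∧ ((π P : ℕ) : 𝓞 K) ∈ P ∧ π P ≤ absNorm P ∧
      (1 : ℝ) / absNorm P ≤ g (π P) := by
    intro P hP
    obtain ⟨h1, h0⟩ := hS P hP
    have : P.IsMaximal := h1.isMaximal h0
    obtain ⟨q, n, hn, hqP, hq, H⟩ := Ideal.exists_prime_and_absNorm_eq_pow P
    have hπ : π P = q := by
      simp only [π, H]
      rw [Nat.pow_minFac (by omega), hq.minFac_eq]
    rw [hπ]
    refine ⟨hq, hqP, ?_, ?_⟩
    · rw [H]; exact Nat.le_self_pow (by omega) q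
    · have hq1 : (1 : ℝ) ≤ q := by exact_mod_cast hq.one_lt.le
      by_cases hn1 : n = 1
      · subst hn1
        rw [pow_one] at H
        have hqT : q ∈ T := H ▸ hT P h1 h0 (H ▸ hq)
        simp only [g, H, Set.indicator_of_mem hqT]
        have : (0 : ℝ) ≤ 1 / (q : ℝ) ^ 2 := by positivity
        linarith
      · have : (1 : ℝ) / absNorm P ≤ 1 / (q : ℝ) ^ 2 := by
          rw [H]; push_cast
          gcongr
          omega
        have h5 : 0 ≤ T.indicator (fun p : ℕ => (1 : ℝ) / p) q :=
          Set.indicator_nonneg (by intros; positivity) _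
        simp only [g]
        linarith
  calc ∑ P ∈ S, (1 : ℝ) / absNorm P ≤ ∑ P ∈ S, g (π P) :=
        Finset.sum_le_sum fun P hP => (hfac P hP).2.2.2
    _ = ∑ p ∈ S.image π, ∑ P ∈ S with π P = p, g (π P) :=
        (Finset.sum_fiberwise_of_maps_to (fun P hP => Finset.mem_image_of_mem _ hP) _).symm
    _ ≤ ∑ p ∈ S.image π, d * g p := by
        refine Finset.sum_le_sum fun p hp => ?_
        rw [Finset.sum_congr rfl (g := fun _ => g p)
          (fun P hP => by rw [(Finset.mem_filter.mp hP).2]), Finset.sum_const, nsmul_eq_mul]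
        refine mul_le_mul_of_nonneg_right ?_ (hg0 p)
        obtain ⟨Q, hQ, rfl⟩ := Finset.mem_image.mp hp
        exact_mod_cast aux_fiber K (π Q) (hfac Q hQ).1 _ (by
          intro P hP
          rw [Finset.mem_filter] at hP
          have := hfac P hP.1
          rw [← hP.2]
          exact ⟨(hS P hP.1).1, (hS P hP.1).2, this.2.1, this.2.2.1⟩)
    _ = d * ∑ p ∈ S.image π, g p := by rw [Finset.mul_sum]
    _ ≤ _ := by
        gcongr
        exact hg.sum_le_tsum _ (fun p _ => hg0 p)

lemma aux_A (K : Type*) [Field K] [NumberField K] (m : ℕ) (hm : 0 < m) (P Q : ℕ → Ideal (𝓞 K))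
    (T : Set ℕ) (hP : ∀ p, p.Prime → ¬ p ∣ m → absNorm (P p) = p)
    (hQ : ∀ p ∈ T, p.Prime ∧ absNorm (Q p) = p ∧ Q p ≠ P p) :
    Summable (T.indicator fun p : ℕ => (1 : ℝ) / p) := by
  classical
  obtain ⟨C, hC⟩ := aux_card_bound K
  let J : ℕ → Ideal (𝓞 K) := fun k => (Multiset.map P (k.primeFactorsList : Multiset ℕ)).prod
  have hgood : ∀ j, ∀ p ∈ (m * j + 1).primeFactorsList, p.Prime ∧ ¬ p ∣ m := by
    intro j p hp
    rw [Nat.mem_primeFactorsList (by omega)] at hp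
    refine ⟨hp.1, fun hd => hp.1.one_lt.ne' ?_⟩
    exact Nat.dvd_one.mp ((Nat.dvd_add_right (hd.mul_right j)).mp hp.2)
  have hJ : ∀ j, absNorm (J (m * j + 1)) = m * j + 1 := by
    intro j
    simp only [J]
    rw [map_multiset_prod, Multiset.map_map, Multiset.map_congr (g := id) rfl]
    · rw [Multiset.map_id, Multiset.prod_coe, Nat.prod_primeFactorsList (by omega)]
    · intro p hp
      have := hgood j p (by simpa using hp)
      exact hP p this.1 this.2
  have hprime : ∀ I : Ideal (𝓞 K), (absNorm I).Prime → I.IsMaximal := by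
    intro I hI
    have h1 : I.IsPrime := isPrime_of_irreducible_absNorm hI
    refine h1.isMaximal ?_
    rintro rfl
    simp at hI
    exact Nat.not_prime_zero hI
  have hinj : ∀ j j' p p', p ∈ T → p' ∈ T →
      J (m * j + 1) * Q p = J (m * j' + 1) * Q p' → p = p' ∧ j = j' := by
    intro j j' p p' hp hp' he
    obtain ⟨hpp, hpn, hpne⟩ := hQ p hp
    obtain ⟨hpp', hpn', hpne'⟩ := hQ p' hp'
    have hpeq : p = p' := by
      have hmax := hprime (Q p) (hpn.symm ▸ hpp)
      have hmax' := hprime (Q p') (hpn'.symm ▸ hpp')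
      have hle : J (m * j' + 1) * Q p' ≤ Q p := he ▸ Ideal.mul_le_right
      rcases (hmax.isPrime.mul_le).mp hle with h | h
      · obtain ⟨I, hI, hIle⟩ := (hmax.isPrime.multiset_prod_le).mp h
        obtain ⟨q, hq, rfl⟩ := Multiset.mem_map.mp hI
        have hg := hgood j' q (by simpa using hq)
        have hqn := hP q hg.1 hg.2
        have hmq := hprime (P q) (hqn.symm ▸ hg.1)
        have heq := hmq.eq_of_le hmax.ne_top hIle
        have : q = p := by rw [← hqn, heq, hpn]
        subst this
        exact absurd heq.symm hpne
      · have heq := hmax'.eq_of_le hmax.ne_top h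
        rw [← hpn, ← heq, hpn']
    subst hpeq
    refine ⟨rfl, ?_⟩
    have h1 := congrArg absNorm he
    rw [map_mul, map_mul, hJ, hJ, hpn] at h1
    have h2 := Nat.eq_of_mul_eq_mul_right hpp.pos h1
    have h3 : m * j = m * j' := by omega
    exact Nat.eq_of_mul_eq_mul_left hm h3
  refine summable_of_sum_le (c := C * m) (fun p => Set.indicator_nonneg (by intros; positivity) _)
    fun F0 => ?_
  rw [Finset.sum_indicator_eq_sum_filter (t := fun _ => T)]
  set F := F0.filter (fun p => p ∈ T) with hF
  have hFT : ∀ p ∈ F, p ∈ T := fun p hp => (Finset.mem_filter.mp hp).2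
  let R : ℕ := ∏ p ∈ F, p
  have hR : 0 < R := Finset.prod_pos fun p hp => (hQ p (hFT p hp)).1.pos
  have hdvd : ∀ p ∈ F, p ∣ R := fun p hp => Finset.dvd_prod_of_mem _ hp
  let X : Finset (Σ _ : ℕ, ℕ) := F.sigma fun p => Finset.range (R / p)
  have hcard := hC (m * R) (by positivity) (X.image fun x => J (m * x.2 + 1) * Q x.1) (by
    intro I hI
    obtain ⟨⟨p, j⟩, hx, rfl⟩ := Finset.mem_image.mp hI
    simp only [X, Finset.mem_sigma, Finset.mem_range] at hx
    simp only [map_mul, hJ, (hQ p (hFT p hx.1)).2.1]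
    obtain ⟨r, hr⟩ := hdvd p hx.1
    have hp0 := (hQ p (hFT p hx.1)).1.pos
    rw [hr, Nat.mul_div_cancel_left _ hp0] at hx
    rw [hr]
    have h2 : j + 1 ≤ r := hx.2
    calc (m * j + 1) * p ≤ (m * (j + 1)) * p := by
          gcongr; rw [mul_add]; omega
      _ ≤ (m * r) * p := by gcongr
      _ = m * (p * r) := by ring)
  rw [Finset.card_image_of_injOn, Finset.card_sigma] at hcard
  · simp only [Finset.card_range] at hcard
    push_cast at hcard
    have : ∑ p ∈ F, ((R / p : ℕ) : ℝ) = R * ∑ p ∈ F, (1 : ℝ) / p := by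
      rw [Finset.mul_sum]
      refine Finset.sum_congr rfl fun p hp => ?_
      rw [Nat.cast_div (hdvd p hp) (by exact_mod_cast (hQ p (hFT p hp)).1.ne_zero)]
      ring
    rw [this] at hcard
    have hR' : (0 : ℝ) < R := by exact_mod_cast hR
    refine le_of_mul_le_mul_left (a := (R : ℝ)) ?_ hR'
    linarith
  · rintro ⟨p, j⟩ hx ⟨p', j'⟩ hx' he
    simp only [X, Finset.coe_sigma, Set.mem_sigma_iff, Finset.mem_coe] at hx hx'
    obtain ⟨rfl, rfl⟩ := hinj j j' p p' (hFT p hx.1) (hFT p' hx'.1) he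
    rfl

lemma aux_hom (K : Type*) [Field K] [NumberField K] (θ : 𝓞 K) (p : ℕ) (hp : p.Prime)
    (hd : ¬ p ∣ RingOfIntegers.exponent θ) (a : ZMod p)
    (ha : Polynomial.aeval a (minpoly ℤ θ) = 0) :
    ∃ φ : 𝓞 K →+* ZMod p, φ θ = a := by
  have : Fact p.Prime := ⟨hp⟩
  let e := RingOfIntegers.ZModXQuotSpanEquivQuotSpan hd
  let ψ : Polynomial (ZMod p) ⧸ Ideal.span
      {Polynomial.map (Int.castRingHom (ZMod p)) (minpoly ℤ θ)} →+* ZMod p :=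
    Ideal.Quotient.lift _ (Polynomial.evalRingHom a) (by
      intro x hx
      obtain ⟨y, rfl⟩ := Ideal.mem_span_singleton.mp hx
      rw [map_mul, Polynomial.coe_evalRingHom, Polynomial.eval_map,
        ← algebraMap_int_eq, ← Polynomial.aeval_def, ha, zero_mul])
  refine ⟨(ψ.comp e.symm.toRingHom).comp (Ideal.Quotient.mk _), ?_⟩
  have h1 := RingOfIntegers.ZModXQuotSpanEquivQuotSpan_mk_apply hd Polynomial.X
  rw [Polynomial.aeval_X] at h1
  simp only [RingHom.comp_apply, ← h1]
  simp [ψ, e]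

lemma aux_ker (K : Type*) [Field K] [NumberField K] (p : ℕ) (hp : p.Prime)
    (φ : 𝓞 K →+* ZMod p) : absNorm (RingHom.ker φ) = p := by
  have : Fact p.Prime := ⟨hp⟩
  have hs : Function.Surjective φ := ZMod.ringHom_surjective φ
  rw [absNorm_apply, Submodule.cardQuot_apply,
    Nat.card_congr (RingHom.quotientKerEquivOfSurjective hs).toEquiv, Nat.card_zmod]

lemma aux_exponent (K : Type*) [Field K] [NumberField K] (θ : 𝓞 K) (B : PowerBasis ℚ K)
    (hB : B.gen = θ) : RingOfIntegers.exponent θ ≠ 0 := by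
  classical
  have hint : IsIntegral ℤ B.gen := by rw [hB]; exact θ.isIntegral_coe
  have h1 : IsIntegral ℤ (Algebra.discr ℚ B.basis) :=
    Algebra.discr_isIntegral ℚ (by intro i; rw [B.basis_eq_pow]; exact hint.pow _)
  obtain ⟨D, hD⟩ := IsIntegrallyClosed.isIntegral_iff.mp h1
  have hD0 : D ≠ 0 := by
    rintro rfl
    exact Algebra.discr_not_zero_of_basis ℚ B.basis (by rw [← hD]; simp)
  have hmem : ∀ b : 𝓞 K, (D : 𝓞 K) * b ∈ Algebra.adjoin ℤ {θ} := by
    intro b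
    have h2 := Algebra.discr_mul_isIntegral_mem_adjoin ℚ hint b.isIntegral_coe
    rw [← hD, hB] at h2
    have h3 : (Algebra.adjoin ℤ {θ}).map (IsScalarTower.toAlgHom ℤ (𝓞 K) K) =
        Algebra.adjoin ℤ {(θ : K)} := by
      rw [AlgHom.map_adjoin]; simp
    rw [← h3] at h2
    obtain ⟨c, hc, hce⟩ := h2
    have : c = (D : 𝓞 K) * b := by
      apply RingOfIntegers.coe_injective
      simpa [Algebra.smul_def] using hce
    rw [← this]; exact hc
  intro h0
  rw [RingOfIntegers.exponent_eq_sInf, Nat.sInf_eq_zero] at h0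
  rcases h0 with h0 | h0
  · simp at h0
  · have : D.natAbs ∈ {d : ℕ | 0 < d ∧ (d : 𝓞 K) ∈ conductor ℤ θ} := by
      refine ⟨Int.natAbs_pos.mpr hD0, ?_⟩
      rw [mem_conductor_iff]
      intro b
      rcases Int.natAbs_eq D with h | h
      · have := hmem b
        rw [h] at this
        simpa using this
      · have := neg_mem (hmem b)
        rw [h] at this
        simpa using this
    rw [h0] at this
    exact this

lemma aux_two_roots (f : Polynomial ℤ) (hmonic : f.Monic) (hirr : Irreducible f)
    (hn : 2 ≤ f.natDegree) (L : Type*) [Field L] [NumberField L]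
    (hsp : ((f.map (algebraMap ℤ ℚ)).map (algebraMap ℚ L)).Splits) :
    ∃ α β : 𝓞 L, α ≠ β ∧ Polynomial.aeval α f = 0 ∧ Polynomial.aeval β f = 0 := by
  classical
  have hirrQ : Irreducible (f.map (algebraMap ℤ ℚ)) :=
    hmonic.irreducible_iff_irreducible_map_fraction_map.mp hirr
  have hsep : ((f.map (algebraMap ℤ ℚ)).map (algebraMap ℚ L)).Separable := hirrQ.separable.map
  have hnd := Polynomial.nodup_roots hsep
  have hcard := hsp.natDegree_eq_card_roots
  rw [Polynomial.natDegree_map, hmonic.natDegree_map] at hcard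
  rw [← Multiset.toFinset_card_of_nodup hnd] at hcard
  obtain ⟨α, hα, β, hβ, hne⟩ := Finset.one_lt_card.mp (by omega :
    1 < ((f.map (algebraMap ℤ ℚ)).map (algebraMap ℚ L)).roots.toFinset.card)
  have key : ∀ x ∈ ((f.map (algebraMap ℤ ℚ)).map (algebraMap ℚ L)).roots.toFinset,
      Polynomial.aeval x f = 0 := by
    intro x hx
    have := Polynomial.isRoot_of_mem_roots (Multiset.mem_toFinset.mp hx)
    rw [Polynomial.IsRoot, Polynomial.map_map, Polynomial.eval_map] at this
    rw [Polynomial.aeval_def, ← this]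
    congr 1
    exact Subsingleton.elim _ _
  have hint : ∀ x : L, Polynomial.aeval x f = 0 → IsIntegral ℤ x := fun x hx =>
    ⟨f, hmonic, by rwa [← Polynomial.aeval_def]⟩
  have hα' := key α hα
  have hβ' := key β hβ
  obtain ⟨a, rfl⟩ : ∃ a : 𝓞 L, (a : L) = α := ⟨⟨α, hint α hα'⟩, rfl⟩
  obtain ⟨b, rfl⟩ : ∃ b : 𝓞 L, (b : L) = β := ⟨⟨β, hint β hβ'⟩, rfl⟩
  refine ⟨a, b, fun h => hne (h ▸ rfl), ?_, ?_⟩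
  · apply RingOfIntegers.coe_injective
    rw [map_zero, ← hα', Polynomial.aeval_algebraMap_apply]
  · apply RingOfIntegers.coe_injective
    rw [map_zero, ← hβ', Polynomial.aeval_algebraMap_apply]

lemma aux_exists_field (f : Polynomial ℤ) (hmonic : f.Monic) (hirr : Irreducible f) :
    ∃ (K : Type) (_ : Field K) (_ : NumberField K) (θ : 𝓞 K) (B : PowerBasis ℚ K),
      B.gen = θ ∧ minpoly ℤ θ = f := by
  have hirrQ : Irreducible (f.map (algebraMap ℤ ℚ)) :=
    hmonic.irreducible_iff_irreducible_map_fraction_map.mp hirr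
  have : Fact (Irreducible (f.map (algebraMap ℤ ℚ))) := ⟨hirrQ⟩
  let B := AdjoinRoot.powerBasis hirrQ.ne_zero
  have hfd : FiniteDimensional ℚ (AdjoinRoot (f.map (algebraMap ℤ ℚ))) := B.finite
  have hcz : CharZero (AdjoinRoot (f.map (algebraMap ℤ ℚ))) :=
    charZero_of_injective_algebraMap (algebraMap ℚ _).injective
  have hNF : NumberField (AdjoinRoot (f.map (algebraMap ℤ ℚ))) := { }
  obtain ⟨x, hx, hxB⟩ : ∃ x : AdjoinRoot (f.map (algebraMap ℤ ℚ)),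
      Polynomial.aeval x f = 0 ∧ B.gen = x := by
    refine ⟨AdjoinRoot.root _, ?_, AdjoinRoot.powerBasis_gen _⟩
    have := AdjoinRoot.eval₂_root (f.map (algebraMap ℤ ℚ))
    rw [Polynomial.eval₂_map] at this
    rw [Polynomial.aeval_def, ← this]
    congr 1
  have hint : IsIntegral ℤ x := ⟨f, hmonic, by rwa [← Polynomial.aeval_def]⟩
  obtain ⟨θ, hθ⟩ : ∃ a : 𝓞 (AdjoinRoot (f.map (algebraMap ℤ ℚ))), (a : AdjoinRoot _) = x :=
    ⟨⟨x, hint⟩, rfl⟩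
  refine ⟨AdjoinRoot (f.map (algebraMap ℤ ℚ)), inferInstance, hNF, θ, B, hxB.trans hθ.symm, ?_⟩
  have h1 : minpoly ℤ x = f := by
    apply Polynomial.map_injective (algebraMap ℤ ℚ) (RingHom.injective_int _)
    rw [← minpoly.isIntegrallyClosed_eq_field_fractions' ℚ hint]
    refine (minpoly.eq_of_irreducible_of_monic hirrQ ?_ (hmonic.map _)).symm
    rw [Polynomial.aeval_map_algebraMap, hx]
  rw [← RingOfIntegers.minpoly_coe, hθ]
  convert! h1

/-- A monic irreducible integer polynomial with a root modulo every prime has degree 1.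
(Cassels–Fröhlich, p. 362, Ex. 6.2.) -/
theorem stmt_2 (f : Polynomial ℤ) (hmonic : f.Monic) (hirr : Irreducible f)
    (h : ∀ (p : ℕ), p.Prime → ∃ x : ZMod p, Polynomial.aeval x f = 0) :
    f.natDegree = 1 := by
  classical
  by_contra hne
  have h0 : f.natDegree ≠ 0 := by
    intro h0
    exact hirr.not_isUnit ((Polynomial.eq_one_of_monic_natDegree_zero hmonic h0) ▸ isUnit_one)
  have hn : 2 ≤ f.natDegree := by omega
  obtain ⟨K, _, _, θ, B, hB, hmin⟩ := aux_exists_field f hmonic hirr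
  have hm0 := aux_exponent K θ B hB
  set m := RingOfIntegers.exponent θ with hm
  let T : Set ℕ := {p | p.Prime ∧ ¬ p ∣ m ∧ ∃ a b : ZMod p, a ≠ b ∧
    Polynomial.aeval a f = 0 ∧ Polynomial.aeval b f = 0}
  have hφ : ∀ p : ℕ, p.Prime → ¬ p ∣ m → ∀ a : ZMod p, Polynomial.aeval a f = 0 →
      ∃ φ : 𝓞 K →+* ZMod p, φ θ = a := fun p hp hd a ha =>
    aux_hom K θ p hp hd a (hmin.symm ▸ ha)
  have hkerne : ∀ p : ℕ, p.Prime → ∀ φ ψ : 𝓞 K →+* ZMod p, φ θ ≠ ψ θ →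
      RingHom.ker φ ≠ RingHom.ker ψ := by
    intro p hp φ ψ hne he
    have : Fact p.Prime := ⟨hp⟩
    apply hne
    obtain ⟨z, hz⟩ := ZMod.intCast_surjective (φ θ)
    have h1 : θ - (z : 𝓞 K) ∈ RingHom.ker φ := by
      rw [RingHom.mem_ker, map_sub, map_intCast, hz, sub_self]
    rw [he, RingHom.mem_ker, map_sub, map_intCast, hz, sub_eq_zero] at h1
    exact h1.symm
  have hPex : ∀ p : ℕ, ∃ I : Ideal (𝓞 K), (p.Prime → ¬ p ∣ m →
      ∃ φ : 𝓞 K →+* ZMod p, I = RingHom.ker φ) := by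
    intro p
    by_cases hp : p.Prime ∧ ¬ p ∣ m
    · obtain ⟨a, ha⟩ := h p hp.1
      obtain ⟨φ, -⟩ := hφ p hp.1 hp.2 a ha
      exact ⟨RingHom.ker φ, fun _ _ => ⟨φ, rfl⟩⟩
    · exact ⟨⊤, fun h1 h2 => absurd ⟨h1, h2⟩ hp⟩
  choose P hP using hPex
  have hQex : ∀ p : ℕ, ∃ I : Ideal (𝓞 K), (p ∈ T → absNorm I = p ∧ I ≠ P p) := by
    intro p
    by_cases hp : p ∈ T
    · obtain ⟨hpp, hpm, a, b, hab, ha, hb⟩ := hp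
      obtain ⟨φ, hφ'⟩ := hP p hpp hpm
      obtain ⟨ψ, hψ⟩ := hφ p hpp hpm a ha
      obtain ⟨χ, hχ⟩ := hφ p hpp hpm b hb
      by_cases hc : φ θ = a
      · refine ⟨RingHom.ker χ, fun _ => ⟨aux_ker K p hpp χ, ?_⟩⟩
        rw [hφ']
        exact hkerne p hpp _ _ (by rw [hχ, hc]; exact hab.symm)
      · refine ⟨RingHom.ker ψ, fun _ => ⟨aux_ker K p hpp ψ, ?_⟩⟩
        rw [hφ']
        exact hkerne p hpp _ _ (by rw [hψ]; exact fun h => hc h.symm)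
    · exact ⟨⊤, fun h => absurd h hp⟩
  choose Q hQ using hQex
  have hsum := aux_A K m (Nat.pos_of_ne_zero hm0) P Q T
    (fun p hp hd => by
      obtain ⟨φ, hφ'⟩ := hP p hp hd
      rw [hφ']
      exact aux_ker K p hp φ)
    (fun p hp => ⟨hp.1, (hQ p hp).1, (hQ p hp).2⟩)
  -- the splitting field
  let L := (f.map (algebraMap ℤ ℚ)).SplittingField
  have hNF : NumberField L := { }
  obtain ⟨α, β, hαβ, hα, hβ⟩ := aux_two_roots f hmonic hirr hn L
    (Polynomial.SplittingField.splits _)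
  let D : ℕ := (Algebra.norm ℤ (α - β)).natAbs
  have hD0 : D ≠ 0 := by
    simp only [D, Ne, Int.natAbs_eq_zero, Algebra.norm_eq_zero_iff]
    exact sub_ne_zero.mpr hαβ
  have hfin : Summable (((m * D).divisors : Set ℕ).indicator fun p : ℕ => (1 : ℝ) / p) :=
    summable_of_hasFiniteSupport ((Finset.finite_toSet _).subset Set.support_indicator_subset)
  refine aux_B L (T ∪ ((m * D).divisors : Set ℕ)) ?_ ?_
  · intro I hI hI0 hIp
    by_cases hdm : absNorm I ∣ m * D
    · right
      simp [Nat.mem_divisors, hdm, hm0, hD0]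
    · left
      have hdm1 : ¬ absNorm I ∣ m := fun hd => hdm (hd.mul_right _)
      have hdm2 : ¬ absNorm I ∣ D := fun hd => hdm (hd.mul_left _)
      have hfinI : Finite (𝓞 L ⧸ I) := (absNorm_ne_zero_iff I).mp hIp.ne_zero
      let _ : Fintype (𝓞 L ⧸ I) := Fintype.ofFinite _
      have hcard : Fintype.card (𝓞 L ⧸ I) = absNorm I := by
        rw [absNorm_apply, Submodule.cardQuot_apply, Nat.card_eq_fintype_card]
      let e := ZMod.ringEquivOfPrime (𝓞 L ⧸ I) hIp hcard
      let φ : 𝓞 L →+* ZMod (absNorm I) := e.symm.toRingHom.comp (Ideal.Quotient.mk I)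
      have hroot : ∀ x : 𝓞 L, Polynomial.aeval x f = 0 → Polynomial.aeval (φ x) f = 0 := by
        intro x hx
        have := Polynomial.aeval_algHom_apply φ.toIntAlgHom x f
        rw [hx, map_zero] at this
        exact this
      refine ⟨hIp, hdm1, φ α, φ β, ?_, hroot α hα, hroot β hβ⟩
      intro he
      apply hdm2
      have : α - β ∈ I := by
        have h1 : e.symm (Ideal.Quotient.mk I α) = e.symm (Ideal.Quotient.mk I β) := he
        exact Ideal.Quotient.eq.mp (e.symm.injective h1)
      have := absNorm_dvd_norm_of_mem this
      exact Int.natCast_dvd.mp this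
  · refine Summable.of_nonneg_of_le
      (fun p => Set.indicator_nonneg (by intros; positivity) _) (fun p => ?_) (hsum.add hfin)
    have hpos : (0 : ℝ) ≤ 1 / p := by positivity
    simp only [Set.indicator_apply, Set.mem_union]
    split_ifs <;> first | tauto | linarith
end

section
/- Let H be a group, let Δ ≤ H × H be the diagonal subgroup (the range of h ↦ (h, h)), and let Z denote the center of H. Then the normalizer of Δ in H × H equals the join (the subgroup generated by the union) of Δ and the product subgroup Z × Z. -/
/-- The normalizer of the diagonal subgroup of `H × H` is generated by the diagonal
together with the product of centers `Z(H) × Z(H)`. -/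
theorem stmt_5 (H : Type*) [Group H] :
    Subgroup.normalizer (((MonoidHom.id H).prod (MonoidHom.id H)).range : Set (H × H)) =
      ((MonoidHom.id H).prod (MonoidHom.id H)).range ⊔
        (Subgroup.center H).prod (Subgroup.center H) := by
  apply le_antisymm
  · rintro ⟨a, b⟩ hab
    rw [Subgroup.mem_normalizer_iff] at hab
    have key : ∀ h : H, a * h * a⁻¹ = b * h * b⁻¹ := by
      intro h
      obtain ⟨k, hk⟩ := (hab (h, h)).1 ⟨h, rfl⟩
      have h1 : k = a * h * a⁻¹ := congrArg Prod.fst hk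
      have h2 : k = b * h * b⁻¹ := congrArg Prod.snd hk
      exact h1.symm.trans h2
    have hc : a⁻¹ * b ∈ Subgroup.center H := by
      rw [Subgroup.mem_center_iff]
      intro g
      have h2 : a⁻¹ * (a * g * a⁻¹) * b = a⁻¹ * (b * g * b⁻¹) * b := by rw [key g]
      calc g * (a⁻¹ * b) = a⁻¹ * (a * g * a⁻¹) * b := by group
        _ = a⁻¹ * (b * g * b⁻¹) * b := h2
        _ = a⁻¹ * b * g := by group
    have e : ((a, b) : H × H) = (a, a) * (1, a⁻¹ * b) := by simp
    rw [e]
    exact Subgroup.mul_mem_sup ⟨a, rfl⟩ ⟨Subgroup.one_mem _, hc⟩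
  · refine sup_le Subgroup.le_normalizer ?_
    rintro ⟨a, b⟩ ⟨ha, hb⟩
    rw [Subgroup.mem_normalizer_iff]
    rintro ⟨x, y⟩
    have e : ((a, b) : H × H) * (x, y) * (a, b)⁻¹ = (x, y) := by
      have h1 := Subgroup.mem_center_iff.1 ha x
      have h2 := Subgroup.mem_center_iff.1 hb y
      ext
      · exact mul_inv_eq_of_eq_mul h1.symm
      · exact mul_inv_eq_of_eq_mul h2.symm
    rw [e]
end

section
/- Let k be a field, let V and W be k-vector spaces, and let S be a set of linear endomorphisms of V and S' a set of linear endomorphisms of W. Let V^S = {x ∈ V : g x = x for all g ∈ S} and W^{S'} = {y ∈ W : g' y = y for all g' ∈ S'} be the corresponding fixed subspaces. Then the set of elements t ∈ V ⊗[k] W satisfying (g ⊗ id)(t) = t for all g ∈ S and (id ⊗ g')(t) = t for all g' ∈ S' is exactly the image of V^S ⊗[k] W^{S'} in V ⊗[k] W (the subspace spanned by pure tensors x ⊗ y with x ∈ V^S and y ∈ W^{S'}). -/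
open TensorProduct

lemma fixR_aux {k : Type*} [Field k] {V W : Type*}
    [AddCommGroup V] [Module k V] [AddCommGroup W] [Module k W]
    (S' : Set (W →ₗ[k] W)) (q : W →ₗ[k] W)
    (hq : ∀ y, (∀ g ∈ S', g y = y) → q y = y) (t : V ⊗[k] W)
    (h : ∀ g' ∈ S', TensorProduct.map LinearMap.id g' t = t) :
    TensorProduct.map LinearMap.id q t = t := by
  classical
  let b := Module.Basis.ofVectorSpace k V
  let e := TensorProduct.equivFinsuppOfBasisLeft (N := W) b
  have key : ∀ (g : W →ₗ[k] W) (t : V ⊗[k] W) i,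
      e (TensorProduct.map LinearMap.id g t) i = g (e t i) := by
    intro g t i
    induction t with
    | zero => simp
    | tmul x y => simp [e, TensorProduct.equivFinsuppOfBasisLeft_apply_tmul_apply]
    | add x y hx hy => simp [hx, hy]
  apply e.injective
  ext i
  rw [key]
  apply hq
  intro g hg
  rw [← key, h g hg]

lemma fixL_aux {k : Type*} [Field k] {V W : Type*}
    [AddCommGroup V] [Module k V] [AddCommGroup W] [Module k W]
    (S : Set (V →ₗ[k] V)) (p : V →ₗ[k] V)
    (hp : ∀ y, (∀ g ∈ S, g y = y) → p y = y) (t : V ⊗[k] W)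
    (h : ∀ g ∈ S, TensorProduct.map g LinearMap.id t = t) :
    TensorProduct.map p LinearMap.id t = t := by
  have key : ∀ g : V →ₗ[k] V, TensorProduct.map LinearMap.id g (TensorProduct.comm k V W t)
      = TensorProduct.comm k V W (TensorProduct.map g LinearMap.id t) := by
    intro g
    rw [TensorProduct.map_comm]
  apply (TensorProduct.comm k V W).injective
  rw [← key]
  apply fixR_aux S p hp
  intro g hg
  rw [key, h g hg]

lemma proj_aux {k : Type*} [Field k] {V : Type*} [AddCommGroup V] [Module k V]
    (S : Set (V →ₗ[k] V)) : ∃ p : V →ₗ[k] V, (∀ y, (∀ g ∈ S, g y = y) → p y = y) ∧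
      ∀ y, ∀ g ∈ S, g (p y) = p y := by
  let A : Submodule k V :=
    { carrier := {x | ∀ g ∈ S, g x = x}
      add_mem' := fun {a b} ha hb g hg => by rw [map_add, ha g hg, hb g hg]
      zero_mem' := fun g _ => map_zero g
      smul_mem' := fun c x hx g hg => by rw [map_smul, hx g hg] }
  obtain ⟨f, hf⟩ := A.subtype.exists_leftInverse_of_injective A.ker_subtype
  refine ⟨A.subtype ∘ₗ f, fun y hy => ?_, fun y => (f y).2⟩
  have := LinearMap.congr_fun hf (⟨y, hy⟩ : A)
  simpa using congrArg Subtype.val this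


/-- The tensors of `V ⊗ W` fixed by `g ⊗ id` for all `g ∈ S` and by `id ⊗ g'` for all
`g' ∈ S'` are exactly the span of pure tensors `x ⊗ y` with `x` fixed by `S` and `y`
fixed by `S'`. -/
theorem stmt_7 (k : Type*) [Field k] (V W : Type*)
    [AddCommGroup V] [Module k V] [AddCommGroup W] [Module k W]
    (S : Set (V →ₗ[k] V)) (S' : Set (W →ₗ[k] W)) :
    {t : V ⊗[k] W | (∀ g ∈ S, TensorProduct.map g LinearMap.id t = t) ∧
        (∀ g' ∈ S', TensorProduct.map LinearMap.id g' t = t)} =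
      ↑(Submodule.span k {t : V ⊗[k] W |
          ∃ x ∈ {x : V | ∀ g ∈ S, g x = x},
          ∃ y ∈ {y : W | ∀ g' ∈ S', g' y = y}, t = x ⊗ₜ[k] y}) := by

  obtain ⟨p, hp, hp'⟩ := proj_aux S
  obtain ⟨q, hq, hq'⟩ := proj_aux S'
  ext t
  simp only [Set.mem_ofPred_eq, SetLike.mem_coe]
  constructor
  · rintro ⟨h1, h2⟩
    rw [← fixL_aux S p hp t h1, ← fixR_aux S' q hq t h2]
    clear h1 h2
    induction t with
    | zero => simp
    | tmul x y => exact Submodule.subset_span ⟨p x, hp' x, q y, hq' y, by simp⟩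
    | add x y hx hy => simpa only [map_add] using add_mem hx hy
  · intro h
    induction h using Submodule.span_induction with
    | mem t ht =>
      obtain ⟨x, hx, y, hy, rfl⟩ := ht
      exact ⟨fun g hg => by simp [hx g hg], fun g hg => by simp [hy g hg]⟩
    | zero => simp
    | add a b _ _ ha hb =>
      exact ⟨fun g hg => by rw [map_add, ha.1 g hg, hb.1 g hg],
        fun g hg => by rw [map_add, ha.2 g hg, hb.2 g hg]⟩
    | smul c a _ ha =>
      exact ⟨fun g hg => by rw [map_smul, ha.1 g hg], fun g hg => by rw [map_smul, ha.2 g hg]⟩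
end
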